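/- There exist α ∈ (0, 1/2) and constants C > 0 and c > 0 such that the following holds. Let s satisfy (1 − α)/2 < s < 1/2, let ε₁ ∈ (0, 1], and let θ be a classical solution of the regularized fractional Burgers equation with viscosity ε₁ on ℝ × [−1, 0] satisfying |θ| ≤ 1 on ℝ × [−1, 0]. Then |θ(y, 0) − θ(x, 0)| ≤ C|x − y|^α for all x, y ∈ ℝ with |x − y| > c ε₁^{2−2s}. The constants α, C, c do not depend on ε₁ or on θ. -/

import Mathlib

open MeasureTheory Real Set Filter

/-- The normalizing constant of the 1-D fractional Laplacian. -/
noncomputable def fracC (s : ℝ) : ℝ :=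
  (4 : ℝ) ^ s * Real.Gamma (1 / 2 + s) / (Real.sqrt Real.pi * |Real.Gamma (-s)|)

/-- The fractional Laplacian `(-Δ)^s u (x)`. -/
noncomputable def fracLap (s : ℝ) (u : ℝ → ℝ) (x : ℝ) : ℝ :=
  fracC s * ∫ y : ℝ, (u x - u y) / |x - y| ^ (1 + 2 * s)

/-- A classical solution of the regularized fractional Burgers equation
`θ_t + θ θ_x + (-Δ)^s θ - ε₁ θ_xx = 0` on a set `D ⊆ ℝ × ℝ` (points written `(x, t)`):
a bounded continuous function, continuously differentiable in `t` and twice continuously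
differentiable in `x`, satisfying the equation at every point of `D`, where the fractional
Laplacian (acting in `x`) is given by an absolutely convergent integral. -/
structure IsClassicalSolution (s ε₁ : ℝ) (θ : ℝ → ℝ → ℝ) (D : Set (ℝ × ℝ)) : Prop where
  bounded : ∃ B : ℝ, ∀ p ∈ D, |θ p.1 p.2| ≤ B
  cont : ContinuousOn (fun p : ℝ × ℝ => θ p.1 p.2) D
  diff_t : ∀ p ∈ D, DifferentiableAt ℝ (fun t => θ p.1 t) p.2
  cont_dt : ContinuousOn (fun p : ℝ × ℝ => deriv (fun t => θ p.1 t) p.2) D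
  diff_x : ∀ p ∈ D, DifferentiableAt ℝ (fun x => θ x p.2) p.1
  diff_xx : ∀ p ∈ D, DifferentiableAt ℝ (deriv fun x => θ x p.2) p.1
  cont_dx : ContinuousOn (fun p : ℝ × ℝ => deriv (fun x => θ x p.2) p.1) D
  cont_dxx : ContinuousOn (fun p : ℝ × ℝ => deriv (deriv fun x => θ x p.2) p.1) D
  integrable : ∀ p ∈ D,
    Integrable fun y : ℝ => (θ p.1 p.2 - θ y p.2) / |p.1 - y| ^ (1 + 2 * s)
  eqn : ∀ p ∈ D,
    deriv (fun t => θ p.1 t) p.2 + θ p.1 p.2 * deriv (fun x => θ x p.2) p.1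
      + fracLap s (fun x => θ x p.2) p.1
      - ε₁ * deriv (deriv fun x => θ x p.2) p.1 = 0

/-!
The proof doubles variables. Put `ω z = C |z| ^ α`. If the estimate fails at time `0`, then
`θ(x, t) - θ(y, t) - ω(x - y) - φ(x) + κ t`, with a small coercive penalty `φ`, has a maximum at
which `Θ = θ(x, t) - θ(y, t) > ω(x - y)`, and the tilt `κ t` keeps it away from the initial time.
Write `ξ = x - y`; then `|ξ| < 1`, because `Θ ≤ 2 sup |θ| ≤ C`.

Up to errors controlled by `φ`, the equation at `x` and at `y` gives the following. Moving both
points by `h` leaves `ω` unchanged, so the viscosity contributes with a favourable sign, whatever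
its size. The pairs at distance `2 ξ`, together with `ω(2 ξ) ≤ (3 / 2) ω(ξ)`, show that the
fractional diffusion decreases `Θ` at a rate of at least `c |ξ| ^ (-2 s) Θ`. The transport term is
`Θ ω'(ξ)`, at most `α C |ξ| ^ (α - 1) Θ`. Since `1 - α ≤ 2 s`, the diffusion wins for `α` small, and
since `|ξ| ^ (-2 s) Θ ≥ C` it makes `Θ` decrease faster than the tilt allows once `C` is large.
-/

/-! ### The normalizing constant -/

lemma neg_ne_neg_natCast_of_mem_Ioo {s : ℝ} (hs : s ∈ Ioo (0 : ℝ) 1) (m : ℕ) :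
    -s ≠ -(m : ℝ) := by
  intro h
  have hsm : s = m := neg_injective h
  rcases m.eq_zero_or_pos with rfl | hm
  · simpa [hsm] using hs.1
  · have : (1 : ℝ) ≤ m := by exact_mod_cast hm
    linarith [hs.2]

lemma fracC_pos {s : ℝ} (hs : s ∈ Ioo (0 : ℝ) 1) : 0 < fracC s := by
  have hΓ : 0 < Gamma (1 / 2 + s) := Gamma_pos_of_pos (by linarith [hs.1])
  have hΓ' : 0 < |Gamma (-s)| := abs_pos.2 (Gamma_ne_zero (neg_ne_neg_natCast_of_mem_Ioo hs))
  unfold fracC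
  positivity

lemma continuousOn_fracC : ContinuousOn fracC (Ioo 0 1) := by
  refine continuousOn_of_forall_continuousAt fun s hs => ?_
  have hne := neg_ne_neg_natCast_of_mem_Ioo hs
  have hΓ : ContinuousAt (fun s : ℝ => Gamma (1 / 2 + s)) s := by
    refine ContinuousAt.comp (g := Gamma) ?_ (by fun_prop)
    refine (differentiableAt_Gamma fun m hm => ?_).continuousAt
    linarith [hs.1, m.cast_nonneg (α := ℝ)]
  have hΓ' : ContinuousAt (fun s : ℝ => Gamma (-s)) s :=
    ContinuousAt.comp (g := Gamma) (differentiableAt_Gamma hne).continuousAt (by fun_prop)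
  have h4 : ContinuousAt (fun s : ℝ => (4 : ℝ) ^ s) s :=
    (continuous_const_rpow (by norm_num)).continuousAt
  refine (h4.mul hΓ).div (continuousAt_const.mul hΓ'.abs) ?_
  have := Gamma_ne_zero hne
  positivity

lemma exists_pos_forall_le_fracC {a b : ℝ} (ha : 0 < a) (hb : b < 1) :
    ∃ c, 0 < c ∧ ∀ s ∈ Icc a b, c ≤ fracC s :=
  have hsub : Icc a b ⊆ Ioo 0 1 := Icc_subset_Ioo ha hb
  isCompact_Icc.exists_forall_le' (continuousOn_fracC.mono hsub) fun _ hs => fracC_pos (hsub hs)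

/-! ### The singular integral -/

/-- Absolute convergence of the integral in `fracLap s u x`. Without it, `fracLap s u x` is the
junk value `0`. -/
def FracLapIntegrableAt (s : ℝ) (u : ℝ → ℝ) (x : ℝ) : Prop :=
  Integrable fun y => (u x - u y) / |x - y| ^ (1 + 2 * s)

lemma fracLapIntegrableAt_iff_integrable_add {s x : ℝ} {u : ℝ → ℝ} :
    FracLapIntegrableAt s u x ↔ Integrable fun h => (u x - u (x + h)) / |h| ^ (1 + 2 * s) := by
  refine ⟨fun H => ?_, fun H => ?_⟩
  · simpa using H.comp_add_left x
  · simpa [abs_sub_comm, FracLapIntegrableAt] using H.comp_sub_right x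

lemma fracLap_eq_integral_add (s : ℝ) (u : ℝ → ℝ) (x : ℝ) :
    fracLap s u x = fracC s * ∫ h, (u x - u (x + h)) / |h| ^ (1 + 2 * s) := by
  rw [fracLap, ← integral_add_left_eq_self _ x]
  simp

lemma FracLapIntegrableAt.const_mul {s x : ℝ} {u : ℝ → ℝ} (hu : FracLapIntegrableAt s u x)
    (c : ℝ) : FracLapIntegrableAt s (fun z => c * u z) x := by
  simpa only [FracLapIntegrableAt, mul_div_assoc, ← mul_sub] using! Integrable.const_mul hu c

lemma FracLapIntegrableAt.integrable_abs_sub_div {s x : ℝ} {u : ℝ → ℝ}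
    (hu : FracLapIntegrableAt s u x) :
    Integrable fun h => |u x - u (x + h)| / |h| ^ (1 + 2 * s) :=
  (fracLapIntegrableAt_iff_integrable_add.1 hu).norm.congr (Eventually.of_forall fun h => by
    simp only [norm_div, norm_eq_abs, abs_of_nonneg (by positivity : 0 ≤ |h| ^ (1 + 2 * s))])

/-- The integral of `fracLap s φ x`, centred at `x`, with the increments of `φ` replaced by their
absolute values. It bounds what a perturbation by `φ` can contribute to a fractional Laplacian. -/
noncomputable def absFracLap (s : ℝ) (φ : ℝ → ℝ) (x : ℝ) : ℝ :=
  fracC s * ∫ h, |φ x - φ (x + h)| / |h| ^ (1 + 2 * s)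

lemma absFracLap_const_mul (s c x : ℝ) (φ : ℝ → ℝ) :
    absFracLap s (fun z => c * φ z) x = |c| * absFracLap s φ x := by
  simp only [absFracLap, ← mul_sub, abs_mul, mul_div_assoc, integral_const_mul]
  ring

/-- Pairing `h` with `h + ξ` makes the bound insensitive to where `F` is concentrated: it only uses
that the kernel is at least `(2 * |ξ|) ^ (-p)` on the segment from `0` to `2 * ξ`. -/
lemma le_integral_div_abs_rpow {p m ξ : ℝ} {F : ℝ → ℝ} (hp : 0 ≤ p) (hF : ∀ h, 0 ≤ F h)
    (hm : ∀ h, m ≤ F h + F (h + ξ)) (hint : Integrable fun h => F h / |h| ^ p) :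
    |ξ| * m / (2 * |ξ|) ^ p ≤ ∫ h, F h / |h| ^ p := by
  wlog hξ : 0 ≤ ξ generalizing ξ F
  · have hint' : Integrable fun h => F (-h) / |h| ^ p := by simpa using hint.comp_neg
    have heq : ∫ h, F (-h) / |h| ^ p = ∫ h, F h / |h| ^ p := by
      simpa using integral_neg_eq_self (fun h => F h / |h| ^ p) volume
    rw [← heq, ← abs_neg ξ]
    exact this (fun h => hF _) (fun h => by simpa [add_comm] using hm (-h)) hint' (by linarith)
  set G : ℝ → ℝ := fun h => F h / |h| ^ p
  have hG : ∀ a b, IntervalIntegrable G volume a b := fun _ _ => hint.intervalIntegrable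
  have hG' : IntervalIntegrable (fun h => G (h + ξ)) volume 0 ξ :=
    (hint.comp_add_right ξ).intervalIntegrable
  have hle : ∀ h ∈ Ioc 0 (2 * ξ), F h / (2 * ξ) ^ p ≤ G h := fun h ⟨hpos, hle⟩ => by
    have : h ^ p ≤ (2 * ξ) ^ p := rpow_le_rpow hpos.le hle hp
    simp only [G, abs_of_pos hpos]
    exact div_le_div_of_nonneg_left (hF h) (by positivity) this
  rw [abs_of_nonneg hξ]
  calc ξ * m / (2 * ξ) ^ p = ∫ _ in (0 : ℝ)..ξ, m / (2 * ξ) ^ p := by simp [mul_div_assoc]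
    _ ≤ ∫ h in (0 : ℝ)..ξ, (G h + G (h + ξ)) := by
        refine intervalIntegral.integral_mono_on_of_le_Ioo hξ (by simp) ((hG 0 ξ).add hG')
          fun h ⟨hpos, hlt⟩ => ?_
        have hleft := hle h ⟨hpos, by linarith⟩
        have hright := hle (h + ξ) ⟨by linarith, by linarith⟩
        have hpair : m / (2 * ξ) ^ p ≤ (F h + F (h + ξ)) / (2 * ξ) ^ p := by gcongr; exact hm h
        rw [add_div] at hpair
        linarith
    _ = ∫ h in (0 : ℝ)..(2 * ξ), G h := by
        rw [intervalIntegral.integral_add (hG 0 ξ) hG', intervalIntegral.integral_comp_add_right,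
          zero_add, ← two_mul, intervalIntegral.integral_add_adjacent_intervals (hG _ _) (hG _ _)]
    _ ≤ ∫ h, G h := by
        rw [intervalIntegral.integral_of_le (by linarith)]
        exact setIntegral_le_integral hint
          (Eventually.of_forall fun h => div_nonneg (hF h) (by positivity))

/-! ### A slowly growing penalty -/

lemma integrableOn_Ioc_log_one_add_div_rpow {p : ℝ} (hp : p < 2) :
    IntegrableOn (fun h : ℝ => log (1 + h) / h ^ p) (Ioc 0 1) := by
  have hint : IntegrableOn (fun h : ℝ => h ^ (1 - p)) (Ioc 0 1) :=
    (intervalIntegrable_iff_integrableOn_Ioc_of_le zero_le_one).1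
      (intervalIntegral.intervalIntegrable_rpow' (by linarith))
  refine hint.mono' (Measurable.aestronglyMeasurable (by fun_prop)) ?_
  filter_upwards [ae_restrict_mem measurableSet_Ioc] with h ⟨hpos, _⟩
  have hlog₀ : 0 ≤ log (1 + h) := log_nonneg (by linarith)
  have hlog : log (1 + h) ≤ h := by linarith [log_le_sub_one_of_pos (show 0 < 1 + h by linarith)]
  rw [norm_of_nonneg (by positivity), rpow_sub hpos, rpow_one]
  gcongr

lemma integrableOn_Ioi_log_one_add_div_rpow {p : ℝ} (hp : 1 < p) :
    IntegrableOn (fun h : ℝ => log (1 + h) / h ^ p) (Ioi 1) := by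
  set r : ℝ := (p - 1) / 2 with hr
  have hr₀ : 0 < r := by linarith
  have hint : IntegrableOn (fun h : ℝ => 2 ^ r / r * h ^ (r - p)) (Ioi 1) :=
    (integrableOn_Ioi_rpow_of_lt (by linarith) zero_lt_one).const_mul _
  refine hint.mono' (Measurable.aestronglyMeasurable (by fun_prop)) ?_
  filter_upwards [ae_restrict_mem measurableSet_Ioi] with h (hone : 1 < h)
  have hpos : 0 < h := by linarith
  have hlog₀ : 0 ≤ log (1 + h) := log_nonneg (by linarith)
  have hlog : log (1 + h) ≤ 2 ^ r / r * h ^ r :=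
    calc log (1 + h) ≤ (1 + h) ^ r / r := log_le_rpow_div (by linarith) hr₀
      _ ≤ (2 * h) ^ r / r := by gcongr; linarith
      _ = 2 ^ r / r * h ^ r := by rw [mul_rpow (by norm_num) hpos.le]; ring
  rw [norm_of_nonneg (by positivity), rpow_sub hpos, ← mul_div_assoc]
  gcongr

lemma integrable_log_one_add_abs_div_rpow {p : ℝ} (hp : 1 < p) (hp' : p < 2) :
    Integrable fun h : ℝ => log (1 + |h|) / |h| ^ p := by
  have hIoi : IntegrableOn (fun h : ℝ => log (1 + h) / h ^ p) (Ioi 0) := by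
    rw [← Ioc_union_Ioi_eq_Ioi zero_le_one]
    exact (integrableOn_Ioc_log_one_add_div_rpow hp').union
      (integrableOn_Ioi_log_one_add_div_rpow hp)
  simpa using! (integrable_fun_norm_addHaar (volume : Measure ℝ)
    (f := fun h : ℝ => log (1 + h) / h ^ p)).2 (by simpa using hIoi)

lemma log_one_add_add_sq_sub_le (x h : ℝ) :
    log (1 + (x + h) ^ 2) - log (1 + x ^ 2) ≤ 2 * log (1 + |h|) := by
  have hle : 1 + (x + h) ^ 2 ≤ (1 + x ^ 2) * (1 + |h|) ^ 2 := by
    have hxh : x * h ≤ |x| * |h| := by rw [← abs_mul]; exact le_abs_self _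
    nlinarith [sq_abs x, sq_abs h, mul_nonneg (sq_nonneg (1 - |x|)) (abs_nonneg h),
      mul_nonneg (sq_nonneg x) (sq_nonneg |h|), mul_nonneg (sq_nonneg x) (abs_nonneg h)]
  have hlog := log_le_log (by positivity) hle
  rw [log_mul (by positivity) (by positivity), log_pow] at hlog
  push_cast at hlog
  linarith

lemma abs_log_one_add_add_sq_sub_le (x h : ℝ) :
    |log (1 + x ^ 2) - log (1 + (x + h) ^ 2)| ≤ 2 * log (1 + |h|) := by
  have hback := log_one_add_add_sq_sub_le (x + h) (-h)
  rw [add_neg_cancel_right, abs_neg] at hback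
  exact abs_le.2 ⟨by linarith [log_one_add_add_sq_sub_le x h], hback⟩

lemma hasDerivAt_log_one_add_sub_sq (c x : ℝ) :
    HasDerivAt (fun z => log (1 + (z - c) ^ 2)) (2 * (x - c) / (1 + (x - c) ^ 2)) x := by
  have hne : 1 + (x - c) ^ 2 ≠ 0 := by positivity
  simpa using ((((hasDerivAt_id' x).sub_const c).fun_pow 2).const_add 1).log hne

lemma deriv_log_one_add_sub_sq (c : ℝ) :
    deriv (fun z => log (1 + (z - c) ^ 2)) = fun x => 2 * (x - c) / (1 + (x - c) ^ 2) :=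
  funext fun x => (hasDerivAt_log_one_add_sub_sq c x).deriv

lemma hasDerivAt_two_mul_sub_div_one_add_sub_sq (c x : ℝ) :
    HasDerivAt (fun z => 2 * (z - c) / (1 + (z - c) ^ 2))
      ((2 - 2 * (x - c) ^ 2) / (1 + (x - c) ^ 2) ^ 2) x := by
  have h := (hasDerivAt_id' x).sub_const c
  have hne : 1 + (x - c) ^ 2 ≠ 0 := by positivity
  refine ((h.const_mul 2).fun_div ((h.fun_pow 2).const_add 1) hne).congr_deriv ?_
  push_cast
  ring

/-- A coercive function whose contributions to the optimality conditions at a maximum are at most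
`η`. Subtracting it from a bounded function on `ℝ` forces a maximum to exist at the cost of errors
controlled by `η`. -/
structure IsPenalty (s η : ℝ) (φ : ℝ → ℝ) : Prop where
  nonneg : ∀ x, 0 ≤ φ x
  tendsto_cocompact : Tendsto φ (cocompact ℝ) atTop
  differentiable : Differentiable ℝ φ
  differentiable_deriv : Differentiable ℝ (deriv φ)
  abs_deriv_le : ∀ x, |deriv φ x| ≤ η
  deriv_deriv_le : ∀ x, deriv (deriv φ) x ≤ η
  fracLapIntegrableAt : ∀ x, FracLapIntegrableAt s φ x
  absFracLap_le : ∀ x, absFracLap s φ x ≤ η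

lemma IsPenalty.const_mul {s η δ : ℝ} {φ : ℝ → ℝ} (hφ : IsPenalty s η φ) (hδ : 0 < δ) :
    IsPenalty s (δ * η) (fun z => δ * φ z) := by
  have hderiv : deriv (fun z => δ * φ z) = fun z => δ * deriv φ z :=
    funext fun z => deriv_const_mul δ (hφ.differentiable z)
  constructor
  case nonneg => exact fun x => mul_nonneg hδ.le (hφ.nonneg x)
  case tendsto_cocompact => exact hφ.tendsto_cocompact.const_mul_atTop hδ
  case differentiable => exact hφ.differentiable.const_mul δ
  case differentiable_deriv => exact hderiv ▸ hφ.differentiable_deriv.const_mul δ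
  case abs_deriv_le =>
    intro x
    rw [hderiv, abs_mul, abs_of_pos hδ]
    exact mul_le_mul_of_nonneg_left (hφ.abs_deriv_le x) hδ.le
  case deriv_deriv_le =>
    intro x
    rw [hderiv, deriv_const_mul δ (hφ.differentiable_deriv x)]
    exact mul_le_mul_of_nonneg_left (hφ.deriv_deriv_le x) hδ.le
  case fracLapIntegrableAt => exact fun x => (hφ.fracLapIntegrableAt x).const_mul δ
  case absFracLap_le =>
    intro x
    rw [absFracLap_const_mul, abs_of_pos hδ]
    exact mul_le_mul_of_nonneg_left (hφ.absFracLap_le x) hδ.le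

lemma tendsto_log_one_add_sub_sq_cocompact (c : ℝ) :
    Tendsto (fun z => log (1 + (z - c) ^ 2)) (cocompact ℝ) atTop := by
  have hdist : Tendsto (fun z => ‖z - c‖) (cocompact ℝ) atTop :=
    tendsto_norm_cocompact_atTop.comp (Homeomorph.subRight c).isClosedEmbedding.tendsto_cocompact
  have hsq : Tendsto (fun z => (z - c) ^ 2) (cocompact ℝ) atTop := by
    refine ((tendsto_pow_atTop two_ne_zero).comp hdist).congr fun z => ?_
    exact sq_abs (z - c)
  exact tendsto_log_atTop.comp (tendsto_atTop_add_const_left _ 1 hsq)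

lemma abs_log_one_add_sub_sq_sub_div_rpow_le (p c x h : ℝ) :
    |log (1 + (x - c) ^ 2) - log (1 + (x + h - c) ^ 2)| / |h| ^ p ≤
      2 * (log (1 + |h|) / |h| ^ p) := by
  rw [← mul_div_assoc, add_sub_right_comm]
  gcongr
  exact abs_log_one_add_add_sq_sub_le (x - c) h

lemma fracLapIntegrableAt_log_one_add_sub_sq {s : ℝ} (hs : 0 < s) (hs' : s < 1 / 2) (c x : ℝ) :
    FracLapIntegrableAt s (fun z => log (1 + (z - c) ^ 2)) x := by
  have hlog : Integrable fun h : ℝ => 2 * (log (1 + |h|) / |h| ^ (1 + 2 * s)) :=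
    (integrable_log_one_add_abs_div_rpow (by linarith) (by linarith)).const_mul 2
  rw [fracLapIntegrableAt_iff_integrable_add]
  refine hlog.mono' (Measurable.aestronglyMeasurable (by fun_prop))
    (Eventually.of_forall fun h => ?_)
  rw [norm_div, norm_of_nonneg (by positivity : 0 ≤ |h| ^ (1 + 2 * s))]
  exact abs_log_one_add_sub_sq_sub_div_rpow_le _ c x h

lemma absFracLap_log_one_add_sub_sq_le {s : ℝ} (hs : 0 < s) (hs' : s < 1 / 2) (c x : ℝ) :
    absFracLap s (fun z => log (1 + (z - c) ^ 2)) x ≤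
      fracC s * ∫ h, 2 * (log (1 + |h|) / |h| ^ (1 + 2 * s)) := by
  refine mul_le_mul_of_nonneg_left ?_ (fracC_pos ⟨hs, by linarith⟩).le
  exact integral_mono_of_nonneg (Eventually.of_forall fun h => by positivity)
    ((integrable_log_one_add_abs_div_rpow (by linarith) (by linarith)).const_mul 2)
    (Eventually.of_forall (abs_log_one_add_sub_sq_sub_div_rpow_le _ c x))

lemma exists_isPenalty_log_one_add_sub_sq {s : ℝ} (hs : 0 < s) (hs' : s < 1 / 2) (c : ℝ) :
    ∃ B, 0 < B ∧ IsPenalty s B fun z => log (1 + (z - c) ^ 2) := by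
  set A : ℝ := fracC s * ∫ h, 2 * (log (1 + |h|) / |h| ^ (1 + 2 * s))
  have hA : 0 ≤ A := mul_nonneg (fracC_pos ⟨hs, by linarith⟩).le <| integral_nonneg fun h =>
    mul_nonneg zero_le_two (div_nonneg (log_nonneg (by linarith [abs_nonneg h])) (by positivity))
  refine ⟨2 + A, by linarith, ?_⟩
  constructor
  case nonneg => exact fun x => log_nonneg (by linarith [sq_nonneg (x - c)])
  case tendsto_cocompact => exact tendsto_log_one_add_sub_sq_cocompact c
  case differentiable => exact fun x => (hasDerivAt_log_one_add_sub_sq c x).differentiableAt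
  case differentiable_deriv =>
    rw [deriv_log_one_add_sub_sq]
    exact fun x => (hasDerivAt_two_mul_sub_div_one_add_sub_sq c x).differentiableAt
  case abs_deriv_le =>
    intro x
    rw [deriv_log_one_add_sub_sq, abs_div, abs_of_pos (by positivity : 0 < 1 + (x - c) ^ 2),
      div_le_iff₀ (by positivity), abs_mul, abs_two]
    nlinarith [sq_nonneg (1 - |x - c|), sq_abs (x - c)]
  case deriv_deriv_le =>
    intro x
    rw [deriv_log_one_add_sub_sq, (hasDerivAt_two_mul_sub_div_one_add_sub_sq c x).deriv,
      div_le_iff₀ (by positivity)]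
    nlinarith [sq_nonneg (x - c), sq_nonneg ((x - c) ^ 2)]
  case fracLapIntegrableAt => exact fracLapIntegrableAt_log_one_add_sub_sq hs hs' c
  case absFracLap_le => exact fun x => by linarith [absFracLap_log_one_add_sub_sq_le hs hs' c x]

lemma exists_isPenalty_eq_zero {s η : ℝ} (hs : 0 < s) (hs' : s < 1 / 2) (hη : 0 < η) (c : ℝ) :
    ∃ φ, IsPenalty s η φ ∧ φ c = 0 := by
  obtain ⟨B, hB, hφ⟩ := exists_isPenalty_log_one_add_sub_sq hs hs' c
  refine ⟨fun z => η / B * log (1 + (z - c) ^ 2), ?_, by simp⟩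
  simpa only [div_mul_cancel₀ η hB.ne'] using hφ.const_mul (div_pos hη hB)

/-! ### Doubling of variables -/

/-- The doubled-variable functional comparing `u a - u b` with the modulus `ω (a - b)`, localized
by the penalty `φ`. -/
def doubledDiff (u ω φ : ℝ → ℝ) (a b : ℝ) : ℝ :=
  u a - u b - ω (a - b) - φ a

/-- `(x, y)` is a global maximum point of `doubledDiff u ω φ`. -/
def IsDoubledMax (u ω φ : ℝ → ℝ) (x y : ℝ) : Prop :=
  ∀ a b, doubledDiff u ω φ a b ≤ doubledDiff u ω φ x y

lemma lt_sub_of_doubledDiff_pos {u ω φ : ℝ → ℝ} {x y : ℝ} (hφ : 0 ≤ φ x)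
    (hpos : 0 < doubledDiff u ω φ x y) : ω (x - y) < u x - u y := by
  rw [doubledDiff] at hpos
  linarith

lemma ne_of_doubledDiff_pos {u ω φ : ℝ → ℝ} {x y : ℝ} (hω : 0 ≤ ω 0) (hφ : 0 ≤ φ x)
    (hpos : 0 < doubledDiff u ω φ x y) : x ≠ y := by
  rintro rfl
  simpa [hω.not_gt] using lt_sub_of_doubledDiff_pos hφ hpos

lemma deriv_deriv_nonpos_of_isLocalMax {f : ℝ → ℝ} {x : ℝ} (h : IsLocalMax f x)
    (hc : ContinuousAt f x) : deriv (deriv f) x ≤ 0 := by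
  by_contra! hpos
  have hmin : IsLocalMin f x := isLocalMin_of_deriv_deriv_pos hpos h.deriv_eq_zero hc
  have hconst : f =ᶠ[nhds x] fun _ => f x := by
    filter_upwards [h, hmin] with z hle hge using le_antisymm hle hge
  exact hpos.ne' (by simpa using hconst.deriv.deriv_eq)

lemma deriv_nonneg_of_isMaxOn_Icc {f : ℝ → ℝ} {f' a b t : ℝ} (ht : t ∈ Ioc a b)
    (hf : HasDerivAt f f' t) (hmax : IsMaxOn f (Icc a b) t) : 0 ≤ f' := by
  have hcone : a - t ∈ posTangentConeAt (Icc a b) t :=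
    sub_mem_posTangentConeAt_of_segment_subset <| (convex_Icc a b).segment_subset
      (Ioc_subset_Icc_self ht) (left_mem_Icc.2 (ht.1.le.trans ht.2))
  have hnonpos := hmax.localize.hasFDerivWithinAt_nonpos hf.hasFDerivAt.hasFDerivWithinAt hcone
  simp only [ContinuousLinearMap.toSpanSingleton_apply, smul_eq_mul] at hnonpos
  nlinarith [ht.1]

namespace IsDoubledMax

variable {u ω φ : ℝ → ℝ} {x y : ℝ}

lemma deriv_left (hmax : IsDoubledMax u ω φ x y) {ω' : ℝ} (hu : DifferentiableAt ℝ u x)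
    (hω : HasDerivAt ω ω' (x - y)) (hφ : DifferentiableAt ℝ φ x) :
    deriv u x = ω' + deriv φ x := by
  have hloc : IsLocalMax (fun a => u a - u y - ω (a - y) - φ a) x :=
    Eventually.of_forall fun a => hmax a y
  have := hloc.hasDerivAt_eq_zero
    (((hu.hasDerivAt.sub_const (u y)).sub (hω.comp_sub_const x y)).sub hφ.hasDerivAt)
  linarith

lemma deriv_right (hmax : IsDoubledMax u ω φ x y) {ω' : ℝ} (hu : DifferentiableAt ℝ u y)
    (hω : HasDerivAt ω ω' (x - y)) : deriv u y = ω' := by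
  have hloc : IsLocalMax (fun b => u x - u b - ω (x - b) - φ x) y :=
    Eventually.of_forall fun b => hmax x b
  have := hloc.hasDerivAt_eq_zero
    (((hu.hasDerivAt.const_sub (u x)).sub (hω.comp_const_sub x y)).sub_const (φ x))
  linarith

/-- Translating both points together leaves `ω` unchanged, so `ω` need not be differentiable. -/
lemma deriv_deriv_sub_le (hmax : IsDoubledMax u ω φ x y) (hu : Differentiable ℝ u)
    (hu' : Differentiable ℝ (deriv u)) (hφ : Differentiable ℝ φ)
    (hφ' : Differentiable ℝ (deriv φ)) :
    deriv (deriv u) x - deriv (deriv u) y ≤ deriv (deriv φ) x := by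
  set g : ℝ → ℝ := fun h => u (x + h) - u (y + h) - φ (x + h)
  have hloc : IsLocalMax g 0 := Eventually.of_forall fun h => by
    have := hmax (x + h) (y + h)
    simp only [doubledDiff, add_sub_add_right_eq_sub] at this
    simp only [g, add_zero]
    linarith
  have hshift {f : ℝ → ℝ} (hf : Differentiable ℝ f) (z h : ℝ) :
      HasDerivAt (fun h => f (z + h)) (deriv f (z + h)) h :=
    (hf (z + h)).hasDerivAt.comp_const_add z h
  have hg' : deriv g = fun h => deriv u (x + h) - deriv u (y + h) - deriv φ (x + h) :=
    funext fun h => (((hshift hu x h).sub (hshift hu y h)).sub (hshift hφ x h)).deriv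
  have hg'' : deriv (deriv g) 0 =
      deriv (deriv u) x - deriv (deriv u) y - deriv (deriv φ) x := by
    rw [hg']
    simpa using! (((hshift hu' x 0).sub (hshift hu' y 0)).sub (hshift hφ' x 0)).deriv
  have hgc : ContinuousAt g 0 :=
    (((hshift hu x 0).sub (hshift hu y 0)).sub (hshift hφ x 0)).continuousAt
  linarith [deriv_deriv_nonpos_of_isLocalMax hloc hgc]

/-- Moving the two points by `h` shows that the integrand is nonnegative. Moving them by `x - y + h`
and `h`, to a distance of `2 * (x - y)`, shows that its values at `h` and `h + (x - y)` cannot both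
be small. -/
lemma le_fracLap_sub (hmax : IsDoubledMax u ω φ x y) {s : ℝ} (hs : 0 < s) (hs' : s < 1)
    (hux : FracLapIntegrableAt s u x) (huy : FracLapIntegrableAt s u y)
    (hφ : FracLapIntegrableAt s φ x) :
    fracC s * (|x - y| * (u x - u y + ω (x - y) - ω (2 * (x - y))) /
        (2 * |x - y|) ^ (1 + 2 * s)) ≤
      fracLap s u x - fracLap s u y + absFracLap s φ x := by
  have hφ' := hφ.integrable_abs_sub_div
  rw [fracLapIntegrableAt_iff_integrable_add] at hux huy
  have hu : Integrable fun h =>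
      (u x - u (x + h)) / |h| ^ (1 + 2 * s) - (u y - u (y + h)) / |h| ^ (1 + 2 * s) := hux.sub huy
  set F : ℝ → ℝ := fun h => u x - u (x + h) - (u y - u (y + h)) + |φ x - φ (x + h)|
  have hadd : ∀ h, (u x - u (x + h)) / |h| ^ (1 + 2 * s) - (u y - u (y + h)) / |h| ^ (1 + 2 * s) +
      |φ x - φ (x + h)| / |h| ^ (1 + 2 * s) = F h / |h| ^ (1 + 2 * s) := fun h => by
    simp only [F, add_div, sub_div]
  have hF : ∀ h, 0 ≤ F h := fun h => by
    have := hmax (x + h) (y + h)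
    simp only [doubledDiff, add_sub_add_right_eq_sub] at this
    linarith [neg_abs_le (φ x - φ (x + h))]
  have hpair : ∀ h, u x - u y + ω (x - y) - ω (2 * (x - y)) ≤ F h + F (h + (x - y)) := fun h => by
    have := hmax (x + (h + (x - y))) (y + h)
    rw [doubledDiff, show x + (h + (x - y)) - (y + h) = 2 * (x - y) by ring] at this
    simp only [doubledDiff, F, show y + (h + (x - y)) = x + h by ring] at this ⊢
    linarith [neg_abs_le (φ x - φ (x + (h + (x - y)))), abs_nonneg (φ x - φ (x + h))]
  have hint : Integrable fun h => F h / |h| ^ (1 + 2 * s) :=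
    (hu.add hφ').congr (Eventually.of_forall hadd)
  calc _ ≤ fracC s * ∫ h, F h / |h| ^ (1 + 2 * s) := by
        gcongr
        · exact (fracC_pos ⟨hs, hs'⟩).le
        · exact le_integral_div_abs_rpow (by linarith) hF hpair hint
    _ = fracLap s u x - fracLap s u y + absFracLap s φ x := by
        simp only [← hadd]
        rw [integral_add hu hφ', integral_sub hux huy,
          fracLap_eq_integral_add, fracLap_eq_integral_add, absFracLap]
        ring

end IsDoubledMax

/-! ### The Burgers equation at a doubled maximum -/

/-- The time derivative which the viscous fractional Burgers equation prescribes at `x` for the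
profile `u`. -/
noncomputable def burgersRate (s ε : ℝ) (u : ℝ → ℝ) (x : ℝ) : ℝ :=
  ε * deriv (deriv u) x - u x * deriv u x - fracLap s u x

lemma IsClassicalSolution.deriv_eq_burgersRate {s ε x t : ℝ} {θ : ℝ → ℝ → ℝ} {D : Set (ℝ × ℝ)}
    (hθ : IsClassicalSolution s ε θ D) (hD : (x, t) ∈ D) :
    deriv (θ x) t = burgersRate s ε (fun z => θ z t) x := by
  have := hθ.eqn (x, t) hD
  simp only at this
  rw [burgersRate]
  linarith

lemma IsDoubledMax.burgersRate_sub_le {s ε η M x y ω' : ℝ} {u ω φ : ℝ → ℝ}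
    (hmax : IsDoubledMax u ω φ x y) (hs : 0 < s) (hs' : s < 1) (hε : 0 ≤ ε)
    (hu : Differentiable ℝ u) (hu' : Differentiable ℝ (deriv u))
    (hux : FracLapIntegrableAt s u x) (huy : FracLapIntegrableAt s u y) (hM : |u x| ≤ M)
    (hω : HasDerivAt ω ω' (x - y)) (hφ : IsPenalty s η φ) :
    burgersRate s ε u x - burgersRate s ε u y ≤ (M + ε + 1) * η - (u x - u y) * ω' -
      fracC s * (|x - y| * (u x - u y + ω (x - y) - ω (2 * (x - y))) /
        (2 * |x - y|) ^ (1 + 2 * s)) := by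
  have hlap := hmax.le_fracLap_sub hs hs' hux huy (hφ.fracLapIntegrableAt x)
  have hvisc : ε * (deriv (deriv u) x - deriv (deriv u) y) ≤ ε * η := by
    gcongr
    exact (hmax.deriv_deriv_sub_le hu hu' hφ.differentiable hφ.differentiable_deriv).trans
      (hφ.deriv_deriv_le x)
  have htransport : -(u x * deriv φ x) ≤ M * η :=
    calc -(u x * deriv φ x) ≤ |u x| * |deriv φ x| := by rw [← abs_mul]; exact neg_le_abs _
      _ ≤ M * η := by
        gcongr
        · exact (abs_nonneg _).trans hM
        · exact hφ.abs_deriv_le x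
  rw [burgersRate, burgersRate, hmax.deriv_left (hu x) hω (hφ.differentiable x),
    hmax.deriv_right (hu y) hω]
  linarith [hφ.absFracLap_le x]

/-! ### The Hölder modulus -/

lemma hasDerivAt_abs_rpow_of_ne_zero (p : ℝ) {z : ℝ} (hz : z ≠ 0) :
    HasDerivAt (fun z : ℝ => |z| ^ p) (p * |z| ^ (p - 1) * SignType.sign z) z := by
  refine ((hasDerivAt_abs hz).rpow_const (p := p) (.inl (abs_ne_zero.2 hz))).congr_deriv ?_
  ring

lemma tendsto_mul_abs_rpow_cocompact {C α : ℝ} (hC : 0 < C) (hα : 0 < α) :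
    Tendsto (fun z : ℝ => C * |z| ^ α) (cocompact ℝ) atTop :=
  ((tendsto_rpow_atTop hα).comp tendsto_norm_cocompact_atTop).const_mul_atTop hC

lemma abs_two_mul_rpow_le {α : ℝ} (hα : α ≤ 1 / 2) (z : ℝ) :
    |2 * z| ^ α ≤ 3 / 2 * |z| ^ α := by
  have htwo : (2 : ℝ) ^ α ≤ 3 / 2 :=
    calc (2 : ℝ) ^ α ≤ 2 ^ (1 / 2 : ℝ) := rpow_le_rpow_of_exponent_le one_le_two hα
      _ ≤ 3 / 2 := by rw [← sqrt_eq_rpow]; exact sqrt_le_iff.2 (by norm_num)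
  rw [abs_mul, abs_two, mul_rpow zero_le_two (abs_nonneg z)]
  gcongr

lemma rpow_neg_mul_div_four_le {r m s : ℝ} (hr : 0 < r) (hm : 0 ≤ m) (hs : s ≤ 1 / 2) :
    r ^ (-(2 * s)) * m / 4 ≤ r * m / (2 * r) ^ (1 + 2 * s) := by
  have htwo : (2 : ℝ) ^ (1 + 2 * s) ≤ 4 :=
    calc (2 : ℝ) ^ (1 + 2 * s) ≤ 2 ^ (2 : ℝ) := rpow_le_rpow_of_exponent_le one_le_two (by linarith)
      _ = 4 := by norm_num
  calc r ^ (-(2 * s)) * m / 4 ≤ r ^ (-(2 * s)) * m / 2 ^ (1 + 2 * s) := by gcongr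
    _ = r * m / (2 * r) ^ (1 + 2 * s) := by
      rw [mul_rpow zero_le_two hr.le, rpow_add hr, rpow_one, rpow_neg hr.le]
      field_simp

section HolderModulus

variable {s α C ξ Θ : ℝ}

lemma abs_lt_one_of_mul_abs_rpow_lt (hα : 0 < α) (hC : 0 ≤ C) (hΘ : Θ ≤ C)
    (hlt : C * |ξ| ^ α < Θ) : |ξ| < 1 := by
  by_contra! hge
  have hle : C ≤ C * |ξ| ^ α := le_mul_of_one_le_right hC (one_le_rpow hge hα.le)
  linarith

/-- Since `1 - α ≤ 2 * s`, the transport factor `|ξ| ^ (α - 1)` is no more singular than the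
diffusion factor `|ξ| ^ (-(2 * s))`. -/
lemma neg_mul_deriv_mul_abs_rpow_le (hα : 0 < α) (hs : (1 - α) / 2 ≤ s) (hC : 0 ≤ C)
    (hξ : 0 < |ξ|) (hξ' : |ξ| ≤ 1) (hΘ : 0 ≤ Θ) :
    -(Θ * (C * (α * |ξ| ^ (α - 1) * SignType.sign ξ))) ≤ α * C * (|ξ| ^ (-(2 * s)) * Θ) := by
  have hrpow : |ξ| ^ (α - 1) ≤ |ξ| ^ (-(2 * s)) :=
    rpow_le_rpow_of_exponent_ge hξ hξ' (by linarith)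
  have hsign : -(SignType.sign ξ : ℝ) ≤ 1 := by
    rcases lt_trichotomy ξ 0 with h | h | h <;> simp [h]
  calc _ = α * C * (|ξ| ^ (α - 1) * Θ) * -(SignType.sign ξ : ℝ) := by ring
    _ ≤ α * C * (|ξ| ^ (α - 1) * Θ) := mul_le_of_le_one_right (by positivity) hsign
    _ ≤ α * C * (|ξ| ^ (-(2 * s)) * Θ) := by gcongr

lemma rpow_neg_mul_div_eight_le (hα : α ≤ 1 / 2) (hs : s ≤ 1 / 2) (hC : 0 ≤ C)
    (hξ : 0 < |ξ|) (hlt : C * |ξ| ^ α < Θ) :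
    |ξ| ^ (-(2 * s)) * Θ / 8 ≤
      |ξ| * (Θ + C * |ξ| ^ α - C * |2 * ξ| ^ α) / (2 * |ξ|) ^ (1 + 2 * s) := by
  have htwo : C * |2 * ξ| ^ α ≤ C * (3 / 2 * |ξ| ^ α) := by
    gcongr
    exact abs_two_mul_rpow_le hα _
  have hm : Θ / 2 ≤ Θ + C * |ξ| ^ α - C * |2 * ξ| ^ α := by linarith
  have hΘ : 0 ≤ Θ / 2 := by linarith [show 0 ≤ C * |ξ| ^ α by positivity]
  calc |ξ| ^ (-(2 * s)) * Θ / 8 = |ξ| ^ (-(2 * s)) * (Θ / 2) / 4 := by ring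
    _ ≤ |ξ| * (Θ / 2) / (2 * |ξ|) ^ (1 + 2 * s) := rpow_neg_mul_div_four_le hξ hΘ hs
    _ ≤ _ := by gcongr

lemma le_rpow_neg_mul (hα : α ≤ 2 * s) (hC : 0 ≤ C) (hξ : 0 < |ξ|) (hξ' : |ξ| ≤ 1)
    (hlt : C * |ξ| ^ α < Θ) : C ≤ |ξ| ^ (-(2 * s)) * Θ :=
  calc C ≤ |ξ| ^ (-(2 * s) + α) * C := le_mul_of_one_le_left hC
        (one_le_rpow_of_pos_of_le_one_of_nonpos hξ hξ' (by linarith))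
    _ = |ξ| ^ (-(2 * s)) * (C * |ξ| ^ α) := by rw [rpow_add hξ]; ring
    _ ≤ |ξ| ^ (-(2 * s)) * Θ := by gcongr

end HolderModulus

/-- The gain `fracC s * q / 8` from diffusion, where `q = |x - y| ^ (-(2 * s)) * (u x - u y) ≥ C`,
absorbs the transport term with one half and the prescribed rate `κ` with the other. -/
lemma IsDoubledMax.burgersRate_sub_lt {s ε η κ α C M x y : ℝ} {u φ : ℝ → ℝ}
    (hmax : IsDoubledMax u (fun z => C * |z| ^ α) φ x y)
    (hpos : 0 < doubledDiff u (fun z => C * |z| ^ α) φ x y) (hα : 0 < α) (hα' : α ≤ 1 / 2)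
    (hs : (1 - α) / 2 ≤ s) (hs' : s ≤ 1 / 2) (hε : 0 ≤ ε) (hu : Differentiable ℝ u)
    (hu' : Differentiable ℝ (deriv u)) (hint : ∀ z, FracLapIntegrableAt s u z)
    (hM : ∀ z, |u z| ≤ M) (hφ : IsPenalty s η φ) (hη : (M + ε + 1) * η < 1) (hC : 2 * M ≤ C)
    (hαC : 16 * (α * C) ≤ fracC s) (hκ : 16 * (κ + 1) ≤ fracC s * C) :
    burgersRate s ε u x - burgersRate s ε u y < -κ := by
  have hs₀ : 0 < s := by linarith
  have hC₀ : 0 ≤ C := by linarith [(abs_nonneg _).trans (hM x)]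
  have hxy : x - y ≠ 0 := sub_ne_zero.2 <|
    ne_of_doubledDiff_pos (by simp [hα.ne']) (hφ.nonneg x) hpos
  have hξ : 0 < |x - y| := abs_pos.2 hxy
  have hlt := lt_sub_of_doubledDiff_pos (hφ.nonneg x) hpos
  have hΘ : u x - u y ≤ C := by linarith [(abs_le.1 (hM x)).2, (abs_le.1 (hM y)).1]
  have hξ' := (abs_lt_one_of_mul_abs_rpow_lt hα hC₀ hΘ hlt).le
  have hrate := hmax.burgersRate_sub_le hs₀ (by linarith) hε hu hu' (hint x) (hint y) (hM x)
    ((hasDerivAt_abs_rpow_of_ne_zero α hxy).const_mul C) hφ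
  have hfrac := (fracC_pos (s := s) ⟨hs₀, by linarith⟩).le
  have htransport :=
    neg_mul_deriv_mul_abs_rpow_le hα hs hC₀ hξ hξ' (le_trans (by positivity) hlt.le)
  have hdiffusion :=
    mul_le_mul_of_nonneg_left (rpow_neg_mul_div_eight_le hα' hs' hC₀ hξ hlt) hfrac
  have hq := le_rpow_neg_mul (s := s) (by linarith) hC₀ hξ hξ' hlt
  have habsorb := mul_le_mul_of_nonneg_right hαC (hC₀.trans hq)
  have hgain := mul_le_mul_of_nonneg_left hq hfrac
  linarith

/-! ### Existence of a doubled maximum -/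

lemma exists_isMaxOn_of_le_sub_sub {X Y Z : Type*} [TopologicalSpace X] [TopologicalSpace Y]
    [TopologicalSpace Z] [T2Space Z] [Nonempty X] [Nonempty Y] {Ψ : X × Y × Z → ℝ} {ω : X → ℝ}
    {φ : Y → ℝ} {I : Set Z} {K : ℝ} (hI : IsCompact I) (hI₀ : I.Nonempty)
    (hΨ : ContinuousOn Ψ (univ ×ˢ univ ×ˢ I)) (hω : ∀ x, 0 ≤ ω x)
    (hωtop : Tendsto ω (cocompact X) atTop) (hφ : ∀ y, 0 ≤ φ y)
    (hφtop : Tendsto φ (cocompact Y) atTop)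
    (hle : ∀ p ∈ univ ×ˢ univ ×ˢ I, Ψ p ≤ K - ω p.1 - φ p.2.1) :
    ∃ p ∈ univ ×ˢ univ ×ˢ I, IsMaxOn Ψ (univ ×ˢ univ ×ˢ I) p := by
  obtain ⟨p₀, hp₀⟩ : (univ ×ˢ univ ×ˢ I : Set (X × Y × Z)).Nonempty :=
    univ_nonempty.prod (univ_nonempty.prod hI₀)
  obtain ⟨A, hA, hAω⟩ := mem_cocompact.1 (hωtop.eventually_ge_atTop (K - Ψ p₀))
  obtain ⟨B, hB, hBφ⟩ := mem_cocompact.1 (hφtop.eventually_ge_atTop (K - Ψ p₀))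
  refine hΨ.exists_isMaxOn' (isClosed_univ.prod (isClosed_univ.prod hI.isClosed)) hp₀ ?_
  filter_upwards [mem_inf_of_left (hA.prod (hB.prod hI)).compl_mem_cocompact,
    mem_inf_of_right (mem_principal_self _)] with p hp hpI
  have := hle p hpI
  by_cases hpA : p.1 ∈ A
  · have hpB : p.2.1 ∉ B := fun hpB => hp ⟨hpA, hpB, hpI.2.2⟩
    linarith [hω p.1, show K - Ψ p₀ ≤ φ p.2.1 from hBφ hpB]
  · linarith [hφ p.2.1, show K - Ψ p₀ ≤ ω p.1 from hAω hpA]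

lemma exists_forall_doubledDiff_add_le {θ : ℝ → ℝ → ℝ} {ω φ g : ℝ → ℝ} {M : ℝ} {I : Set ℝ}
    (hI : IsCompact I) (hI₀ : I.Nonempty)
    (hθ : ContinuousOn (fun p : ℝ × ℝ => θ p.1 p.2) (univ ×ˢ I))
    (hM : ∀ x, ∀ t ∈ I, |θ x t| ≤ M) (hω : Continuous ω) (hω₀ : ∀ z, 0 ≤ ω z)
    (hωtop : Tendsto ω (cocompact ℝ) atTop) (hφ : Continuous φ) (hφ₀ : ∀ z, 0 ≤ φ z)
    (hφtop : Tendsto φ (cocompact ℝ) atTop) (hg : ContinuousOn g I) :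
    ∃ x y, ∃ t ∈ I, ∀ a b, ∀ r ∈ I, doubledDiff (fun z => θ z r) ω φ a b + g r ≤
      doubledDiff (fun z => θ z t) ω φ x y + g t := by
  obtain ⟨K, hK⟩ := hI.bddAbove_image hg
  -- In the variables `(a - b, a, r)` the functional is coercive separately in `a - b` and in `a`.
  set Ψ : ℝ × ℝ × ℝ → ℝ := fun p =>
    doubledDiff (fun z => θ z p.2.2) ω φ p.2.1 (p.2.1 - p.1) + g p.2.2
  have hΨ : ContinuousOn Ψ (univ ×ˢ univ ×ˢ I) := by
    have hθ' {f : ℝ × ℝ × ℝ → ℝ} (hf : Continuous f) :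
        ContinuousOn (fun p => θ (f p) p.2.2) (univ ×ˢ univ ×ˢ I) :=
      hθ.comp (hf.prodMk (by fun_prop)).continuousOn fun p hp => ⟨mem_univ _, hp.2.2⟩
    have hleft := hθ' (f := fun p => p.2.1) (by fun_prop)
    have hright := hθ' (f := fun p => p.2.1 - p.1) (by fun_prop)
    have hg' : ContinuousOn (fun p : ℝ × ℝ × ℝ => g p.2.2) (univ ×ˢ univ ×ˢ I) :=
      hg.comp (by fun_prop) fun p hp => hp.2.2
    simp only [Ψ, doubledDiff, sub_sub_cancel]
    exact (((hleft.sub hright).sub (by fun_prop)).sub (by fun_prop)).add hg'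
  have hle : ∀ p ∈ univ ×ˢ univ ×ˢ I, Ψ p ≤ 2 * M + K - ω p.1 - φ p.2.1 := fun p hp => by
    have hx := (abs_le.1 (hM p.2.1 p.2.2 hp.2.2)).2
    have hy := (abs_le.1 (hM (p.2.1 - p.1) p.2.2 hp.2.2)).1
    have hg' := hK (mem_image_of_mem g hp.2.2)
    simp only [Ψ, doubledDiff, sub_sub_cancel]
    linarith
  obtain ⟨p, hp, hmax⟩ := exists_isMaxOn_of_le_sub_sub hI hI₀ hΨ hω₀ hωtop hφ₀ hφtop hle
  refine ⟨p.2.1, p.2.1 - p.1, p.2.2, hp.2.2, fun a b r hr => ?_⟩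
  simpa [Ψ] using hmax (⟨trivial, trivial, hr⟩ : (a - b, a, r) ∈ univ ×ˢ univ ×ˢ I)

/-! ### The Hölder estimate -/

/-- The functional is at most `2 * M` and positive somewhere at time `t₁`, so tilting it by `κ * t`
with `κ = 2 * M / (t₁ - t₀)` keeps the maximum away from time `t₀`. -/
lemma exists_isDoubledMax_of_pos {θ : ℝ → ℝ → ℝ} {ω φ : ℝ → ℝ} {M t₀ t₁ a₁ b₁ : ℝ} (ht : t₀ < t₁)
    (hθ : ContinuousOn (fun p : ℝ × ℝ => θ p.1 p.2) (univ ×ˢ Icc t₀ t₁))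
    (hθt : ∀ x, ∀ t ∈ Icc t₀ t₁, DifferentiableAt ℝ (θ x) t)
    (hM : ∀ x, ∀ t ∈ Icc t₀ t₁, |θ x t| ≤ M) (hω : Continuous ω) (hω₀ : ∀ z, 0 ≤ ω z)
    (hωtop : Tendsto ω (cocompact ℝ) atTop) (hφ : Continuous φ) (hφ₀ : ∀ z, 0 ≤ φ z)
    (hφtop : Tendsto φ (cocompact ℝ) atTop)
    (hpos : 0 < doubledDiff (fun z => θ z t₁) ω φ a₁ b₁) :
    ∃ x y, ∃ t ∈ Icc t₀ t₁, IsDoubledMax (fun z => θ z t) ω φ x y ∧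
      0 < doubledDiff (fun z => θ z t) ω φ x y ∧
      -(2 * M / (t₁ - t₀)) ≤ deriv (θ x) t - deriv (θ y) t := by
  set κ := 2 * M / (t₁ - t₀)
  have hκ : κ * (t₁ - t₀) = 2 * M := div_mul_cancel₀ _ (sub_ne_zero.2 ht.ne')
  have ht₁ : t₁ ∈ Icc t₀ t₁ := right_mem_Icc.2 ht.le
  have hκ₀ : 0 ≤ κ := div_nonneg (by linarith [(abs_nonneg _).trans (hM a₁ t₁ ht₁)]) (by linarith)
  obtain ⟨x, y, t, htI, hmax⟩ := exists_forall_doubledDiff_add_le (g := fun t => κ * t)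
    isCompact_Icc (nonempty_Icc.2 ht.le) hθ hM hω hω₀ hωtop hφ hφ₀ hφtop (by fun_prop)
  have hfinal := hmax a₁ b₁ t₁ ht₁
  have hpos' : 0 < doubledDiff (fun z => θ z t) ω φ x y := by
    nlinarith [mul_nonneg hκ₀ (sub_nonneg.2 htI.2)]
  have hle : doubledDiff (fun z => θ z t) ω φ x y ≤ 2 * M := by
    rw [doubledDiff]
    linarith [(abs_le.1 (hM x t htI)).2, (abs_le.1 (hM y t htI)).1, hω₀ (x - y), hφ₀ x]
  have ht₀ : t₀ < t := by
    refine htI.1.lt_of_ne fun h => ?_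
    subst h
    linarith
  refine ⟨x, y, t, htI, fun a b => by linarith [hmax a b t htI], hpos', ?_⟩
  have hderiv := (((((hθt x t htI).hasDerivAt.sub (hθt y t htI).hasDerivAt).sub_const
    (ω (x - y))).sub_const (φ x)).add ((hasDerivAt_id' t).const_mul κ))
  have := deriv_nonneg_of_isMaxOn_Icc ⟨ht₀, htI.2⟩ hderiv fun r hr => hmax x y r hr
  linarith

lemma IsClassicalSolution.sub_le_mul_abs_rpow {s ε α C M t₀ t₁ : ℝ} {θ : ℝ → ℝ → ℝ}
    (hθ : IsClassicalSolution s ε θ (univ ×ˢ Icc t₀ t₁)) (ht : t₀ < t₁)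
    (hM : ∀ x, ∀ t ∈ Icc t₀ t₁, |θ x t| ≤ M) (hα : 0 < α) (hα' : α ≤ 1 / 2)
    (hs : (1 - α) / 2 ≤ s) (hs' : s < 1 / 2) (hε : 0 ≤ ε) (hC₀ : 0 < C) (hC : 2 * M ≤ C)
    (hαC : 16 * (α * C) ≤ fracC s) (hκ : 16 * (2 * M / (t₁ - t₀) + 1) ≤ fracC s * C)
    (x₁ y₁ : ℝ) : θ x₁ t₁ - θ y₁ t₁ ≤ C * |x₁ - y₁| ^ α := by
  by_contra! hlt
  obtain ⟨η, hη₀, hη⟩ := exists_pos_mul_lt one_pos (M + ε + 1)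
  obtain ⟨φ, hφ, hφ₁⟩ := exists_isPenalty_eq_zero (by linarith) hs' hη₀ x₁
  have hpos : 0 < doubledDiff (fun z => θ z t₁) (fun z => C * |z| ^ α) φ x₁ y₁ := by
    rw [doubledDiff, hφ₁]
    linarith
  obtain ⟨x, y, t, htI, hmax, hpos', hrate⟩ := exists_isDoubledMax_of_pos ht hθ.cont
    (fun x t htI => hθ.diff_t (x, t) ⟨trivial, htI⟩) hM
    (continuous_const.mul (continuous_abs.rpow_const fun _ => .inr hα.le))
    (fun z => mul_nonneg hC₀.le (rpow_nonneg (abs_nonneg z) α))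
    (tendsto_mul_abs_rpow_cocompact hC₀ hα)
    hφ.differentiable.continuous hφ.nonneg hφ.tendsto_cocompact hpos
  have hD (z : ℝ) : (z, t) ∈ (univ ×ˢ Icc t₀ t₁ : Set (ℝ × ℝ)) := ⟨trivial, htI⟩
  rw [hθ.deriv_eq_burgersRate (hD x), hθ.deriv_eq_burgersRate (hD y)] at hrate
  exact hrate.not_gt <| hmax.burgersRate_sub_lt hpos' hα hα' hs hs'.le hε
    (fun z => hθ.diff_x (z, t) (hD z)) (fun z => hθ.diff_xx (z, t) (hD z))
    (fun z => hθ.integrable (z, t) (hD z)) (fun z => hM z t htI) hφ hη hC hαC hκ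

theorem holder_estimate_viscosity_general {M T : ℝ} (hM : 0 ≤ M) (hT : 0 < T) :
    ∃ α C : ℝ, 0 < α ∧ α < 1 / 2 ∧ 0 < C ∧
      ∀ s : ℝ, (1 - α) / 2 ≤ s → s < 1 / 2 →
        ∀ ε₁ : ℝ, 0 ≤ ε₁ →
          ∀ θ : ℝ → ℝ → ℝ,
            IsClassicalSolution s ε₁ θ (univ ×ˢ Icc (-T) 0) →
            (∀ x : ℝ, ∀ t ∈ Icc (-T) 0, |θ x t| ≤ M) →
            ∀ x y : ℝ, |θ y 0 - θ x 0| ≤ C * |x - y| ^ α := by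
  obtain ⟨c₀, hc₀, hfrac⟩ :=
    exists_pos_forall_le_fracC (show (0 : ℝ) < 1 / 4 by norm_num) (show (1 / 2 : ℝ) < 1 by norm_num)
  set C : ℝ := max (2 * M) (16 * (2 * M / T + 1) / c₀)
  set α : ℝ := min (1 / 4) (c₀ / (16 * C))
  have hC : 0 < C := lt_max_of_lt_right (by positivity)
  have hα : 0 < α := lt_min (by norm_num) (by positivity)
  have hα' : α ≤ 1 / 4 := min_le_left _ _
  have hαC : 16 * (α * C) ≤ c₀ :=
    calc 16 * (α * C) = α * (16 * C) := by ring
      _ ≤ c₀ := (le_div_iff₀ (by positivity)).1 (min_le_right _ _)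
  refine ⟨α, C, hα, by linarith, hC, fun s hs hs' ε₁ hε₁ θ hθ hbound => ?_⟩
  have hfrac' : c₀ ≤ fracC s := hfrac s ⟨by linarith, hs'.le⟩
  have hκ : 16 * (2 * M / (0 - -T) + 1) ≤ fracC s * C := by
    rw [zero_sub, neg_neg]
    calc 16 * (2 * M / T + 1) ≤ C * c₀ := (div_le_iff₀ hc₀).1 (le_max_right _ _)
      _ ≤ fracC s * C := by rw [mul_comm]; gcongr
  have hle := hθ.sub_le_mul_abs_rpow (neg_lt_zero.2 hT) hbound hα (by linarith) hs hs' hε₁ hC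
    (le_max_left _ _) (hαC.trans hfrac') hκ
  exact fun x y => abs_sub_le_iff.2 ⟨abs_sub_comm x y ▸ hle y x, hle x y⟩

/-- Hölder continuity at time `0`, down to scale `c ε₁^{2-2s}`, uniformly in
the viscosity `ε₁`, for solutions of the regularized equation bounded by `1`. -/
theorem holder_estimate_viscosity :
    ∃ α C c : ℝ, 0 < α ∧ α < 1 / 2 ∧ 0 < C ∧ 0 < c ∧
      ∀ s : ℝ, (1 - α) / 2 < s → s < 1 / 2 →
        ∀ ε₁ : ℝ, 0 < ε₁ → ε₁ ≤ 1 →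
          ∀ θ : ℝ → ℝ → ℝ,
            IsClassicalSolution s ε₁ θ (Set.univ ×ˢ Set.Icc (-1 : ℝ) 0) →
            (∀ x : ℝ, ∀ t ∈ Set.Icc (-1 : ℝ) 0, |θ x t| ≤ 1) →
            ∀ x y : ℝ, c * ε₁ ^ (2 - 2 * s) < |x - y| →
              |θ y 0 - θ x 0| ≤ C * |x - y| ^ α := by
  obtain ⟨α, C, hα, hα', hC, H⟩ := holder_estimate_viscosity_general zero_le_one one_pos
  exact ⟨α, C, 1, hα, hα', hC, one_pos, fun s hs hs' ε₁ hε₁ _ θ hθ hbound x y _ =>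
    H s hs.le hs' ε₁ hε₁.le θ hθ hbound x y⟩
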